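/- Let (W,T) be a dual Coxeter system of finite rank and let W' be a parabolic subgroup of W, with T' = W' ∩ T the set of reflections lying in W'. Then for every w ∈ W' one has Red_T(w) = Red_{T'}(w); that is, every minimal-length factorization of w into reflections of W uses only reflections belonging to W'. -/

import Mathlib

/-- `Red T' w`: the set of minimal-length factorizations of `w` into elements of `T'`. -/
def Red {W : Type*} [Group W] (T' : Set W) (w : W) : Set (List W) :=
  {l | (∀ t ∈ l, t ∈ T') ∧ l.prod = w ∧
    ∀ l' : List W, (∀ t ∈ l', t ∈ T') → l'.prod = w → l.length ≤ l'.length}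

theorem Function.End.mul_apply {α : Type*} (f g : Function.End α) (x : α) :
    (f * g) x = f (g x) := rfl

theorem Function.End.one_apply {α : Type*} (x : α) : (1 : Function.End α) x = x := rfl

namespace CoxeterSystem

variable {B W : Type*} [Group W] {M : CoxeterMatrix B} (cs : CoxeterSystem M W)

open Classical in
/-- The action of a simple reflection `s i` on pairs `(t, ε)`: conjugate `t` by `s i`, and flip
the sign `ε` exactly when `t = s i`. -/
noncomputable def signedConj (i : B) : Function.End (W × ZMod 2) :=
  fun p => (cs.simple i * p.1 * cs.simple i, p.2 + if p.1 = cs.simple i then 1 else 0)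

open Classical in
theorem signedConj_mul_pow_apply (i j : B) (k : ℕ) (t : W) (ε : ZMod 2) :
    ((cs.signedConj i * cs.signedConj j) ^ k) (t, ε) =
      ((cs.simple i * cs.simple j) ^ k * t * ((cs.simple i * cs.simple j) ^ k)⁻¹,
        ε + ∑ l ∈ Finset.range (2 * k),
          if t = cs.simple j * (cs.simple i * cs.simple j) ^ l then 1 else 0) := by
  have hconj : ∀ l : ℕ, (cs.simple i * cs.simple j) ^ l * cs.simple j =
      cs.simple j * ((cs.simple i * cs.simple j) ^ l)⁻¹ := by
    intro l
    induction l with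
    | zero => simp
    | succ l ih =>
      rw [pow_succ', mul_assoc, ih, ← pow_succ', pow_succ, mul_inv_rev, mul_inv_rev]
      simp [mul_assoc]
  induction k with
  | zero => simp [Function.End.one_apply]
  | succ k ih =>
    set ρ := cs.simple i * cs.simple j with hρ
    have e1 : ρ ^ k * t * (ρ ^ k)⁻¹ = cs.simple j ↔ t = cs.simple j * ρ ^ (2 * k) := by
      rw [mul_inv_eq_iff_eq_mul, ← eq_inv_mul_iff_mul_eq, ← mul_assoc]
      have : (ρ ^ k)⁻¹ * cs.simple j = cs.simple j * ρ ^ k := by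
        rw [inv_mul_eq_iff_eq_mul, ← mul_assoc, hconj]
        simp
      rw [this, mul_assoc, ← pow_add, two_mul]
    have e2 : cs.simple j * (ρ ^ k * t * (ρ ^ k)⁻¹) * cs.simple j = cs.simple i ↔
        t = cs.simple j * ρ ^ (2 * k + 1) := by
      have h2 : cs.simple j * (ρ ^ k * t * (ρ ^ k)⁻¹) * cs.simple j = cs.simple i ↔
          ρ ^ k * t * (ρ ^ k)⁻¹ = cs.simple j * ρ := by
        constructor
        · intro h
          nth_rw 3 [hρ]
          rw [← h]
          simp [mul_assoc]
        · intro h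
          rw [h, hρ]
          simp [mul_assoc]
      rw [h2, mul_inv_eq_iff_eq_mul, ← eq_inv_mul_iff_mul_eq, ← mul_assoc, ← mul_assoc]
      have : (ρ ^ k)⁻¹ * cs.simple j = cs.simple j * ρ ^ k := by
        rw [inv_mul_eq_iff_eq_mul, ← mul_assoc, hconj]
        simp
      rw [this, mul_assoc, mul_assoc, ← pow_succ', ← pow_add]
      congr! 3
      omega
    rw [pow_succ', Function.End.mul_apply, ih, Function.End.mul_apply]
    simp only [signedConj, e1, e2]
    rw [show 2 * (k + 1) = 2 * k + 1 + 1 by ring, Finset.sum_range_succ, Finset.sum_range_succ]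
    refine Prod.ext ?_ ?_
    · simp only [pow_succ', mul_inv_rev]
      simp [hρ, mul_assoc]
    · simp only [add_assoc]

theorem isLiftable_signedConj : M.IsLiftable cs.signedConj := by
  classical
  intro i j
  funext ⟨t, ε⟩
  rw [signedConj_mul_pow_apply, simple_mul_simple_pow, two_mul, Finset.sum_range_add]
  simp only [pow_add, simple_mul_simple_pow, one_mul, CharTwo.add_self_eq_zero]
  simp [Function.End.one_apply]

/-- The action of a Coxeter group on pairs of a group element and a sign. -/
noncomputable def signedConjHom : W →* Function.End (W × ZMod 2) :=
  cs.lift ⟨cs.signedConj, cs.isLiftable_signedConj⟩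

open Classical in
theorem signedConjHom_wordProd_apply (ω : List B) (t : W) (ε : ZMod 2) :
    cs.signedConjHom (cs.wordProd ω) (t, ε) =
      (cs.wordProd ω * t * (cs.wordProd ω)⁻¹, ε + ((cs.rightInvSeq ω).count t : ZMod 2)) := by
  induction ω with
  | nil => simp [Function.End.one_apply]
  | cons i ω ih =>
    rw [wordProd_cons, map_mul, Function.End.mul_apply, ih, signedConjHom,
      lift_apply_simple, signedConj, rightInvSeq, List.count_cons]
    refine Prod.ext ?_ ?_
    · simp [mul_assoc]
    · have : cs.wordProd ω * t * (cs.wordProd ω)⁻¹ = cs.simple i ↔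
          (cs.wordProd ω)⁻¹ * cs.simple i * cs.wordProd ω = t := by
        rw [mul_inv_eq_iff_eq_mul, mul_assoc, inv_mul_eq_iff_eq_mul, eq_comm]
      simp only [this, beq_iff_eq]
      push_cast
      ring

/-- The parity of the number of occurrences of `t` in the right inversion sequence of any word
representing `w`. -/
noncomputable def inversionParity (w t : W) : ZMod 2 := (cs.signedConjHom w (t, 0)).2

theorem signedConjHom_apply (w t : W) (ε : ZMod 2) :
    cs.signedConjHom w (t, ε) = (w * t * w⁻¹, ε + cs.inversionParity w t) := by
  classical
  obtain ⟨ω, rfl⟩ := cs.wordProd_surjective w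
  simp [inversionParity, signedConjHom_wordProd_apply]

theorem inversionParity_mul (v w t : W) :
    cs.inversionParity (v * w) t =
      cs.inversionParity w t + cs.inversionParity v (w * t * w⁻¹) := by
  rw [inversionParity, map_mul, Function.End.mul_apply, signedConjHom_apply,
    signedConjHom_apply, zero_add]

theorem inversionParity_one (t : W) : cs.inversionParity 1 t = 0 := by
  simp [inversionParity, Function.End.one_apply]

theorem inversionParity_simple_self (i : B) :
    cs.inversionParity (cs.simple i) (cs.simple i) = 1 := by
  simp [inversionParity, signedConjHom, lift_apply_simple, signedConj]

theorem mem_rightInvSeq_of_inversionParity_ne_zero {ω : List B} {t : W}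
    (h : cs.inversionParity (cs.wordProd ω) t ≠ 0) : t ∈ cs.rightInvSeq ω := by
  classical
  by_contra hmem
  apply h
  rw [inversionParity, signedConjHom_wordProd_apply, List.count_eq_zero_of_not_mem hmem]
  simp

theorem IsReflection.inversionParity_self {t : W} (ht : cs.IsReflection t) :
    cs.inversionParity t t = 1 := by
  obtain ⟨u, i, rfl⟩ := ht
  have h := cs.inversionParity_mul u u⁻¹ (u * cs.simple i * u⁻¹)
  have hu : u⁻¹ * (u * cs.simple i * u⁻¹) * u⁻¹⁻¹ = cs.simple i := by group
  rw [mul_inv_cancel, inversionParity_one, hu] at h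
  rw [inversionParity_mul, inversionParity_mul, hu, inv_simple, inversionParity_simple_self,
    simple_mul_simple_self, one_mul, add_left_comm, ← h, add_zero]

theorem length_wordProd_mul_lt_of_mem_rightInvSeq {ω : List B} {t : W}
    (ht : t ∈ cs.rightInvSeq ω) : cs.length (cs.wordProd ω * t) < ω.length := by
  induction ω with
  | nil => simp at ht
  | cons i ω ih =>
    rw [rightInvSeq, List.mem_cons] at ht
    rw [wordProd_cons, List.length_cons]
    rcases ht with rfl | ht
    · have := cs.length_wordProd_le ω
      simp only [mul_assoc, mul_inv_cancel_left, simple_mul_simple_cancel_left]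
      omega
    · have h₁ := ih ht
      have h₂ := cs.length_mul_le (cs.simple i) (cs.wordProd ω * t)
      rw [length_simple] at h₂
      rw [mul_assoc]
      omega

/-- The strong exchange property, for arbitrary words. -/
theorem IsRightInversion.mem_rightInvSeq {ω : List B} {t : W}
    (ht : cs.IsRightInversion (cs.wordProd ω) t) : t ∈ cs.rightInvSeq ω := by
  apply mem_rightInvSeq_of_inversionParity_ne_zero
  intro h
  obtain ⟨υ, hυ, hw⟩ := cs.exists_isReduced (cs.wordProd ω * t)
  have hpar : cs.inversionParity (cs.wordProd υ) t ≠ 0 := by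
    rw [← hw, inversionParity_mul, ht.1.inversionParity_self, mul_inv_cancel_right, h]
    decide
  have hlt := cs.length_wordProd_mul_lt_of_mem_rightInvSeq
    (cs.mem_rightInvSeq_of_inversionParity_ne_zero hpar)
  rw [← hυ.eq, ← hw, mul_assoc, ht.1.mul_self, mul_one] at hlt
  exact lt_asymm hlt ht.2

theorem length_wordProd_mul_mul_lt {ω : List B} {t t' : W} (ht : t ∈ cs.rightInvSeq ω)
    (ht' : t' ∈ cs.rightInvSeq ω) (hne : t ≠ t') :
    cs.length (cs.wordProd ω * t * t') < ω.length ∨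
      cs.length (cs.wordProd ω * t' * t) < ω.length := by
  induction ω with
  | nil => simp at ht
  | cons i ω ih =>
    rw [rightInvSeq, List.mem_cons] at ht ht'
    rw [wordProd_cons, List.length_cons]
    rcases ht with rfl | ht <;> rcases ht' with rfl | ht'
    · exact absurd rfl hne
    · left
      have := cs.length_wordProd_mul_lt_of_mem_rightInvSeq ht'
      simp only [mul_assoc, mul_inv_cancel_left, simple_mul_simple_cancel_left]
      omega
    · right
      have := cs.length_wordProd_mul_lt_of_mem_rightInvSeq ht
      simp only [mul_assoc, mul_inv_cancel_left, simple_mul_simple_cancel_left]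
      omega
    · have h₁ := cs.length_mul_le (cs.simple i) (cs.wordProd ω * t * t')
      have h₂ := cs.length_mul_le (cs.simple i) (cs.wordProd ω * t' * t)
      rw [length_simple] at h₁ h₂
      simp only [mul_assoc] at h₁ h₂ ih ⊢
      have := ih ht ht'
      omega

theorem IsRightInversion.length_mul_mul_lt {w t t' : W} (ht : cs.IsRightInversion w t)
    (ht' : cs.IsRightInversion w t') (hne : t ≠ t') :
    cs.length (w * t * t') < cs.length w ∨ cs.length (w * t' * t) < cs.length w := by
  obtain ⟨ω, hω, rfl⟩ := cs.exists_isReduced w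
  rw [hω.eq]
  exact cs.length_wordProd_mul_mul_lt (IsRightInversion.mem_rightInvSeq cs ht)
    (IsRightInversion.mem_rightInvSeq cs ht') hne

section Parabolic

variable {J : Set B}

theorem exists_wordProd_eq_of_mem_closure {w : W}
    (hw : w ∈ Subgroup.closure (cs.simple '' J)) :
    ∃ ω : List B, (∀ i ∈ ω, i ∈ J) ∧ cs.wordProd ω = w := by
  induction hw using Subgroup.closure_induction with
  | mem x hx =>
    obtain ⟨i, hi, rfl⟩ := hx
    exact ⟨[i], by simpa using hi, by simp⟩
  | one => exact ⟨[], by simp, by simp⟩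
  | mul x y _ _ hx hy =>
    obtain ⟨ω, hω, rfl⟩ := hx
    obtain ⟨υ, hυ, rfl⟩ := hy
    refine ⟨ω ++ υ, fun i hi => ?_, cs.wordProd_append ω υ⟩
    exact (List.mem_append.1 hi).elim (hω i) (hυ i)
  | inv x _ hx =>
    obtain ⟨ω, hω, rfl⟩ := hx
    exact ⟨ω.reverse, fun i hi => hω i (List.mem_reverse.1 hi), cs.wordProd_reverse ω⟩

theorem wordProd_mem_closure {ω : List B} (hω : ∀ i ∈ ω, i ∈ J) :
    cs.wordProd ω ∈ Subgroup.closure (cs.simple '' J) := by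
  refine Subgroup.list_prod_mem _ fun x hx => ?_
  obtain ⟨i, hi, rfl⟩ := List.mem_map.1 hx
  exact Subgroup.subset_closure ⟨i, hω i hi, rfl⟩

theorem mem_closure_of_mem_rightInvSeq {ω : List B} (hω : ∀ i ∈ ω, i ∈ J) {t : W}
    (ht : t ∈ cs.rightInvSeq ω) : t ∈ Subgroup.closure (cs.simple '' J) := by
  induction ω with
  | nil => simp at ht
  | cons i ω ih =>
    rw [List.forall_mem_cons] at hω
    rw [rightInvSeq, List.mem_cons] at ht
    rcases ht with rfl | ht
    · have h := cs.wordProd_mem_closure hω.2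
      exact mul_mem (mul_mem (inv_mem h) (Subgroup.subset_closure ⟨i, hω.1, rfl⟩)) h
    · exact ih hω.2 ht

/-- Right inversions of an element of a standard parabolic subgroup lie in that subgroup. -/
theorem IsRightInversion.mem_closure {w t : W} (ht : cs.IsRightInversion w t)
    (hw : w ∈ Subgroup.closure (cs.simple '' J)) : t ∈ Subgroup.closure (cs.simple '' J) := by
  obtain ⟨ω, hω, rfl⟩ := cs.exists_wordProd_eq_of_mem_closure hw
  exact cs.mem_closure_of_mem_rightInvSeq hω (IsRightInversion.mem_rightInvSeq cs ht)

end Parabolic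

/-- The sum of the lengths of the elements visited after `x` by the path in the Bruhat graph that
starts at `x` and multiplies successively by the elements of the list. -/
noncomputable def pathLengthSum : W → List W → ℕ
  | _, [] => 0
  | x, t :: l => cs.length (x * t) + pathLengthSum (x * t) l

theorem pathLengthSum_append (x : W) (a b : List W) :
    cs.pathLengthSum x (a ++ b) = cs.pathLengthSum x a + cs.pathLengthSum (x * a.prod) b := by
  induction a generalizing x with
  | nil => simp [pathLengthSum]
  | cons t a ih => simp [pathLengthSum, ih, mul_assoc, add_assoc]

theorem pathLengthSum_replace_lt (a b : List W) {t t' u u' : W} (hprod : u * u' = t * t')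
    (hlt : cs.length (a.prod * u) < cs.length (a.prod * t)) :
    cs.pathLengthSum 1 (a ++ u :: u' :: b) < cs.pathLengthSum 1 (a ++ t :: t' :: b) := by
  simp only [pathLengthSum_append, pathLengthSum, one_mul, mul_assoc, hprod]
  omega

theorem increasing_or_exists_peak (l : List W) (hl : ∀ t ∈ l, cs.IsReflection t) :
    (∀ a t b, l = a ++ t :: b → cs.length a.prod < cs.length (a.prod * t)) ∨
      ∃ a t t' b, l = a ++ t :: t' :: b ∧ cs.length a.prod < cs.length (a.prod * t) ∧
        cs.length (a.prod * t * t') < cs.length (a.prod * t) := by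
  induction l using List.reverseRecOn with
  | nil => left; simp
  | append_singleton l t' ih =>
    rcases ih fun t ht => hl t (by simp [ht]) with hup | ⟨a, t, r, b, rfl, h₁, h₂⟩
    · have hne := (hl t' (by simp)).length_mul_left_ne l.prod
      rcases lt_or_gt_of_ne hne with hlt | hgt
      · right
        rcases List.eq_nil_or_concat l with rfl | ⟨a, t, rfl⟩
        · simp at hlt
        · refine ⟨a, t, t', [], by simp, hup a t [] (by simp), ?_⟩
          simpa using hlt
      · left
        intro a t b h
        rcases List.eq_nil_or_concat b with rfl | ⟨c, r, rfl⟩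
        · obtain ⟨rfl, h'⟩ := List.append_inj' h rfl
          cases h'
          exact hgt
        · rw [List.concat_eq_append, ← List.cons_append, ← List.append_assoc] at h
          exact hup a t c (List.append_inj' h rfl).1
    · exact Or.inr ⟨a, t, r, b ++ [t'], by simp, h₁, h₂⟩

theorem mem_closure_of_increasing {J : Set B} (l : List W) (hl : ∀ t ∈ l, cs.IsReflection t)
    (hup : ∀ a t b, l = a ++ t :: b → cs.length a.prod < cs.length (a.prod * t))
    (hmem : l.prod ∈ Subgroup.closure (cs.simple '' J)) :
    ∀ t ∈ l, t ∈ Subgroup.closure (cs.simple '' J) := by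
  induction l using List.reverseRecOn with
  | nil => simp
  | append_singleton l t ih =>
    have ht := hl t (by simp)
    rw [List.prod_append, List.prod_singleton] at hmem
    have hinv : cs.IsRightInversion (l.prod * t) t := by
      refine ⟨ht, ?_⟩
      rw [mul_assoc, ht.mul_self, mul_one]
      exact hup l t [] rfl
    have htJ := IsRightInversion.mem_closure cs hinv hmem
    have hlJ := ih (fun u hu => hl u (by simp [hu]))
      (fun a u b h => hup a u (b ++ [t]) (by simp [h]))
      ((Subgroup.mul_mem_cancel_right _ htJ).1 hmem)
    intro u hu
    rcases List.mem_append.1 hu with hu | hu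
    · exact hlJ u hu
    · rwa [List.mem_singleton.1 hu]

/-- Every shortest reflection factorization of an element of a standard parabolic subgroup uses
only reflections of that subgroup. -/
theorem mem_closure_of_mem_red {J : Set B} {w : W}
    (hw : w ∈ Subgroup.closure (cs.simple '' J)) (l : List W)
    (hl : l ∈ Red {t | cs.IsReflection t} w) :
    ∀ t ∈ l, t ∈ Subgroup.closure (cs.simple '' J) := by
  induction hN : cs.pathLengthSum 1 l using Nat.strong_induction_on generalizing l with
  | _ N ih =>
  subst hN
  obtain ⟨hrefl, hprod, hmin⟩ := hl
  rcases cs.increasing_or_exists_peak l hrefl with hup | ⟨a, t, t', b, rfl, h₁, h₂⟩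
  · exact cs.mem_closure_of_increasing l hrefl hup (hprod ▸ hw)
  · have ht : cs.IsReflection t := hrefl t (by simp)
    have ht' : cs.IsReflection t' := hrefl t' (by simp)
    have hne : t ≠ t' := by
      rintro rfl
      have := hmin (a ++ b) (fun u hu => hrefl u (by
          rcases List.mem_append.1 hu with hu | hu <;> simp [hu])) (by
        rw [← hprod]
        simp only [List.prod_append, List.prod_cons]
        rw [← mul_assoc t t, ht.mul_self, one_mul])
      simp at this
    have key : ∀ u u' : W, cs.IsReflection u → cs.IsReflection u' → u * u' = t * t' →
        cs.length (a.prod * u) < cs.length (a.prod * t) →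
        ∀ v ∈ a ++ u :: u' :: b, v ∈ Subgroup.closure (cs.simple '' J) := by
      intro u u' hu hu' huu hlt
      refine ih _ (cs.pathLengthSum_replace_lt a b huu hlt) _ ⟨?_, ?_, ?_⟩ rfl
      · intro v hv
        simp only [List.mem_append, List.mem_cons] at hv
        rcases hv with hv | rfl | rfl | hv
        · exact hrefl v (by simp [hv])
        · exact hu
        · exact hu'
        · exact hrefl v (by simp [hv])
      · rw [← hprod]
        simp only [List.prod_append, List.prod_cons]
        rw [← mul_assoc u, huu, mul_assoc]
      · simpa using hmin
    have hinv : cs.IsRightInversion (a.prod * t) t :=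
      ⟨ht, by rwa [mul_assoc, ht.mul_self, mul_one]⟩
    suffices h : (∀ v ∈ a, v ∈ Subgroup.closure (cs.simple '' J)) ∧
        t ∈ Subgroup.closure (cs.simple '' J) ∧ t' ∈ Subgroup.closure (cs.simple '' J) ∧
        ∀ v ∈ b, v ∈ Subgroup.closure (cs.simple '' J) by
      intro v hv
      simp only [List.mem_append, List.mem_cons] at hv
      rcases hv with hv | rfl | rfl | hv
      exacts [h.1 v hv, h.2.1, h.2.2.1, h.2.2.2 v hv]
    rcases IsRightInversion.length_mul_mul_lt cs hinv ⟨ht', h₂⟩ hne with hlt | hlt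
    · have h := key t' (t' * t * t'⁻¹) ht' (ht.conj t')
        (by rw [ht'.inv, ← mul_assoc, ← mul_assoc, ht'.mul_self, one_mul])
        (by rwa [mul_assoc a.prod t t, ht.mul_self, mul_one] at hlt)
      simp only [List.forall_mem_append, List.forall_mem_cons] at h
      obtain ⟨ha, hu, hu', hb⟩ := h
      refine ⟨ha, ?_, hu, hb⟩
      rwa [Subgroup.mul_mem_cancel_right _ (inv_mem hu), Subgroup.mul_mem_cancel_left _ hu] at hu'
    · have h := key (t * t' * t⁻¹) t (ht'.conj t) ht (by group)
        (by rwa [ht.inv, ← mul_assoc, ← mul_assoc])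
      simp only [List.forall_mem_append, List.forall_mem_cons] at h
      obtain ⟨ha, hu, hu', hb⟩ := h
      refine ⟨ha, hu', ?_, hb⟩
      rwa [Subgroup.mul_mem_cancel_right _ (inv_mem hu'), Subgroup.mul_mem_cancel_left _ hu'] at hu

end CoxeterSystem

theorem exists_mem_red {W : Type*} [Group W] {T : Set W} {w : W} {l : List W}
    (hl : ∀ t ∈ l, t ∈ T) (hprod : l.prod = w) : ∃ l₀ ∈ Red T w, l₀.length ≤ l.length := by
  obtain ⟨l₀, ⟨h₁, h₂⟩, hmin⟩ := exists_minimalFor_of_wellFoundedLT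
    (fun l : List W => (∀ t ∈ l, t ∈ T) ∧ l.prod = w) List.length ⟨l, hl, hprod⟩
  have hle : ∀ l' : List W, (∀ t ∈ l', t ∈ T) → l'.prod = w → l₀.length ≤ l'.length :=
    fun l' h h' => (le_total _ _).elim id (hmin ⟨h, h'⟩)
  exact ⟨l₀, ⟨h₁, h₂, hle⟩, hle l hl hprod⟩

/-- Let `(W,T)` be a dual Coxeter system of finite rank `m`
(witnessed by a Coxeter system `cs` indexed by `Fin m` whose set of reflections is `T`)
and let `W' = ⟨s₁, …, sₙ⟩` (`n ≤ m`) be a parabolic subgroup of `W`, with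
`T' = W' ∩ T` the set of reflections lying in `W'`.  Then for every `w ∈ W'` one has
`Red_T(w) = Red_{T'}(w)`: every minimal-length factorization of `w` into reflections of
`W` uses only reflections belonging to `W'`. -/
theorem red_eq_red_of_mem_parabolic
    {W : Type*} [Group W] (T : Set W) (m n : ℕ) (hmn : n ≤ m)
    (M : CoxeterMatrix (Fin m)) (cs : CoxeterSystem M W)
    (hT : {t | cs.IsReflection t} = T)
    (W' : Subgroup W)
    (hW' : W' = Subgroup.closure (Set.range fun i : Fin n => cs.simple (Fin.castLE hmn i)))
    (T' : Set W) (hT' : T' = ↑W' ∩ T)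
    (w : W) (hw : w ∈ W') :
    Red T w = Red T' w := by
  subst hT hT'
  have hW : W' = Subgroup.closure (cs.simple '' Set.range (Fin.castLE hmn)) := by
    rw [hW', ← Set.range_comp]
    rfl
  rw [hW] at hw
  have hmem : ∀ l ∈ Red {t | cs.IsReflection t} w, ∀ t ∈ l, t ∈ W' := by
    rw [hW]
    exact cs.mem_closure_of_mem_red hw
  ext l
  constructor
  · intro hl
    exact ⟨fun t ht => ⟨hmem l hl t ht, hl.1 t ht⟩, hl.2.1,
      fun l' hl' => hl.2.2 l' fun t ht => (hl' t ht).2⟩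
  · intro hl
    refine ⟨fun t ht => (hl.1 t ht).2, hl.2.1, fun l' hl' hprod => ?_⟩
    obtain ⟨l₀, hl₀, hle⟩ := exists_mem_red hl' hprod
    exact (hl.2.2 l₀ (fun t ht => ⟨hmem l₀ hl₀ t ht, hl₀.1 t ht⟩) hl₀.2.1).trans hle
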